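/- arXiv:2403.13957 — 11 statements merged into one kernel-verified Lean document; each statement's English description precedes it below -/
import Mathlib

section
/- Let W be a subspace of F^n. If x ∈ W and x j = 0 for every red index j of W, then x = 0. Consequently, two elements of W that agree at every red index of W are equal. -/
variable {F : Type*} [Field F] {n : ℕ}

/-- A (nonzero) vector `x` terminates at position `j` if `x j ≠ 0` and all later entries vanish. -/
def TerminatesAt (x : Fin n → F) (j : Fin n) : Prop :=
  x j ≠ 0 ∧ ∀ k, j < k → x k = 0

/-- `j` is a red index of `W` if some element of `W` terminates at `j`. -/
def IsRedIndex (W : Submodule F (Fin n → F)) (j : Fin n) : Prop :=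
  ∃ x ∈ W, TerminatesAt x j

theorem zero_of_vanishes_on_red_indices (F : Type*) [Field F] (n : ℕ)
    (W : Submodule F (Fin n → F)) :
    (∀ x ∈ W, (∀ j, IsRedIndex W j → x j = 0) → x = 0) ∧
    (∀ x ∈ W, ∀ y ∈ W, (∀ j, IsRedIndex W j → x j = y j) → x = y) := by
  have key : ∀ x ∈ W, (∀ j, IsRedIndex W j → x j = 0) → x = 0 := by
    intro x hx h
    by_contra hne
    obtain ⟨i, hi⟩ := Function.ne_iff.mp hne
    -- The last nonzero position of `x` is a red index, witnessed by `x` itself.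
    obtain ⟨j, hj, hmax⟩ := (Set.toFinite {j | x j ≠ 0}).exists_maximal ⟨i, hi⟩
    refine hj (h j ⟨x, hx, hj, fun k hk => ?_⟩)
    by_contra hxk
    exact absurd (hmax hxk hk.le) (not_le.mpr hk)
  refine ⟨key, fun x hx y hy h => sub_eq_zero.mp (key _ (W.sub_mem hx hy) fun j hj => ?_)⟩
  exact sub_eq_zero.mpr (h j hj)
end

section
/- Let W be a subspace of F^n and let x, y ∈ W. Then x = y if and only if x j = y j for every red index j of W. -/
variable {F : Type*} [Field F] {n : ℕ}

theorem eq_iff_agree_on_red_indices (F : Type*) [Field F] (n : ℕ)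
    (W : Submodule F (Fin n → F)) (x y : Fin n → F) (hx : x ∈ W) (hy : y ∈ W) :
    x = y ↔ ∀ j, IsRedIndex W j → x j = y j := by
  constructor
  · rintro rfl j _
    rfl
  · intro h
    by_contra hne
    obtain ⟨i, hi⟩ := Function.ne_iff.mp hne
    -- `x - y` is a nonzero element of `W`, so it terminates at its last nonzero position `j`,
    -- which is a red index at which `x` and `y` differ.
    obtain ⟨j, hj⟩ := (Set.toFinite {j | x j ≠ y j}).exists_maximal ⟨i, hi⟩
    refine hj.prop (h j ⟨x - y, W.sub_mem hx hy, sub_ne_zero.mpr hj.prop, fun k hk => ?_⟩)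
    by_contra hk0
    exact hj.not_gt (sub_ne_zero.mp hk0) hk
end

section
/- (Red-Basic Elements) Let W be a subspace of F^n and let i be a red index of W. Then there exists a unique element w ∈ W such that w terminates at position i with w i = 1 (i.e., w i = 1 and w k = 0 for all k > i) and w j = 0 for every red index j of W with j < i. -/
/-!
Existence is Gaussian elimination: scale an element of `W` terminating at `i`, then clear the red
positions below `i` from right to left, subtracting a multiple of an element terminating at the
position being cleared; this does not disturb the entries further right.
Uniqueness: the difference of two candidates lies in `W` and vanishes at every red index, but the
last nonzero position of a nonzero element of `W` is itself a red index.
-/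
variable {F : Type*} [Field F] {n : ℕ}

/-- A nonzero element of `W` terminates at its last nonzero position, which is a red index. -/
theorem eq_zero_of_red_zero {F : Type*} [Field F] {n : ℕ} {W : Submodule F (Fin n → F)}
    {u : Fin n → F} (hu : u ∈ W) (h : ∀ j, IsRedIndex W j → u j = 0) : u = 0 := by
  classical
  by_contra hne
  obtain ⟨a, ha⟩ := Function.ne_iff.mp hne
  obtain ⟨m, hm, hmax⟩ := (Finset.univ.filter fun k => u k ≠ 0).exists_max_image id
    ⟨a, by simpa using ha⟩
  have hm0 : u m ≠ 0 := by simpa using hm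
  refine hm0 (h m ⟨u, hu, hm0, fun k hk => ?_⟩)
  by_contra hk0
  exact absurd (hmax k (by simpa using hk0)) (not_le.mpr hk)

/-- The elimination after `d` steps: the `d` positions just before `i` have been treated. -/
theorem exists_cleared {F : Type*} [Field F] {n : ℕ} {W : Submodule F (Fin n → F)}
    {i : Fin n} (hi : IsRedIndex W i) (d : ℕ) :
    ∃ w ∈ W, w i = 1 ∧ (∀ k, i < k → w k = 0) ∧
      ∀ j, IsRedIndex W j → j < i → (i : ℕ) ≤ j + d → w j = 0 := by
  induction d with
  | zero =>
    obtain ⟨x, hx, hxi, hx0⟩ := hi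
    refine ⟨(x i)⁻¹ • x, W.smul_mem _ hx, by simp [hxi], fun k hk => by simp [hx0 k hk], ?_⟩
    intro j _ hj hij
    exact absurd (Fin.lt_def.mp hj) (by omega)
  | succ d ih =>
    obtain ⟨w, hw, hwi, hw0, hwr⟩ := ih
    by_cases hp : ∃ p, IsRedIndex W p ∧ (i : ℕ) = p + (d + 1)
    · obtain ⟨p, ⟨x, hx, hxp, hx0⟩, hpi⟩ := hp
      have hpi' : p < i := Fin.lt_def.mpr (by omega)
      refine ⟨w - (w p / x p) • x, W.sub_mem hw (W.smul_mem _ hx), by simp [hx0 i hpi', hwi],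
        fun k hk => by simp [hw0 k hk, hx0 k (hpi'.trans hk)], fun j hj hji hd => ?_⟩
      rcases eq_or_ne j p with rfl | hne
      · simp [hxp]
      · have hne' : (j : ℕ) ≠ p := fun h => hne (Fin.ext h)
        simp [hwr j hj hji (by omega), hx0 j (Fin.lt_def.mpr (by omega))]
    · refine ⟨w, hw, hwi, hw0, fun j hj hji hd => hwr j hj hji ?_⟩
      have : (i : ℕ) ≠ j + (d + 1) := fun h => hp ⟨j, hj, h⟩
      omega

/-- Red-Basic Elements: for each red index `i` of `W` there is a unique element of `W`
terminating at `i` with a `1`, and vanishing at all earlier red indices of `W`. -/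
theorem exists_unique_red_basic (F : Type*) [Field F] (n : ℕ)
    (W : Submodule F (Fin n → F)) (i : Fin n) (hi : IsRedIndex W i) :
    ∃! w : Fin n → F, w ∈ W ∧ w i = 1 ∧ (∀ k, i < k → w k = 0) ∧
      (∀ j, IsRedIndex W j → j < i → w j = 0) := by
  obtain ⟨w, hw, hwi, hw0, hwr⟩ := exists_cleared hi i
  refine ⟨w, ⟨hw, hwi, hw0, fun j hj hji => hwr j hj hji (by omega)⟩, ?_⟩
  rintro v ⟨hv, hvi, hv0, hvr⟩
  refine sub_eq_zero.mp (eq_zero_of_red_zero (W.sub_mem hv hw) fun j hj => ?_)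
  rcases lt_trichotomy j i with h | rfl | h
  · simp [hvr j hj h, hwr j hj h (by omega)]
  · simp [hvi, hwi]
  · simp [hv0 j h, hw0 j h]
end

section
/- (Red Entries Are Free) Let W be a subspace of F^n with red indices i_1 < i_2 < ... < i_k, and let a_1, a_2, ..., a_k ∈ F. Then there exists exactly one element x ∈ W with x i_j = a_j for all j = 1, ..., k. Equivalently, the linear map from W to (functions from the set of red indices of W to F) given by restricting coordinates is bijective. -/
/-!
Uniqueness: a nonzero element of `W` terminates at its last nonzero position, which is therefore a
red index; so an element of `W` vanishing at all red indices is zero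
(`eq_zero_of_forall_isRedIndex`).

Existence: the red entries are corrected from the last to the first. Adding a multiple of an element
of `W` terminating at the red index `i` adjusts the entry at `i` without disturbing any later entry
(`exists_mem_forall_isRedIndex_ge`).
-/

variable {F : Type*} [Field F] {n : ℕ}

theorem eq_zero_of_forall_isRedIndex {W : Submodule F (Fin n → F)} {z : Fin n → F} (hz : z ∈ W)
    (h : ∀ j, IsRedIndex W j → z j = 0) : z = 0 := by
  classical
  by_contra hne
  obtain ⟨i, hi⟩ := Function.ne_iff.mp hne
  obtain ⟨j, hj, hmax⟩ := (Finset.univ.filter fun i => z i ≠ 0).exists_max_image id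
    ⟨i, by simpa using hi⟩
  have hj0 : z j ≠ 0 := by simpa using hj
  refine hj0 (h j ⟨z, hz, hj0, fun k hk => ?_⟩)
  by_contra hk0
  exact absurd (hmax k (by simpa using hk0)) (not_le.mpr hk)

/-- The entries at the red indices among the last `m` positions can be prescribed. -/
theorem exists_mem_forall_isRedIndex_ge (W : Submodule F (Fin n → F)) (a : Fin n → F) (m : ℕ) :
    ∃ x ∈ W, ∀ j : Fin n, IsRedIndex W j → n ≤ j + m → x j = a j := by
  induction m with
  | zero => exact ⟨0, W.zero_mem, fun j _ hj => by omega⟩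
  | succ m ih =>
    obtain ⟨x, hx, hxa⟩ := ih
    by_cases hi : ∃ i : Fin n, IsRedIndex W i ∧ n = i + (m + 1)
    · obtain ⟨i, ⟨y, hy, hyi, hy0⟩, hin⟩ := hi
      refine ⟨x + ((a i - x i) / y i) • y, W.add_mem hx (W.smul_mem _ hy), fun j hj hjm => ?_⟩
      rcases eq_or_ne i j with rfl | hij
      · simp [div_mul_cancel₀ _ hyi]
      · have hlt : i < j := by
          have := Fin.val_ne_of_ne hij
          exact Fin.lt_def.mpr (by omega)
        simp [hy0 j hlt, hxa j hj (by have := Fin.lt_def.mp hlt; omega)]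
    · refine ⟨x, hx, fun j hj hjm => hxa j hj ?_⟩
      by_contra hlt
      exact hi ⟨j, hj, by omega⟩

/-- Red Entries Are Free: any prescription of entries at the red indices of `W` is achieved
by exactly one element of `W`; i.e. restriction of coordinates to the red indices is a
bijection from `W` onto the functions from the set of red indices to `F`. -/
theorem red_entries_are_free (F : Type*) [Field F] (n : ℕ)
    (W : Submodule F (Fin n → F)) (a : {j : Fin n // IsRedIndex W j} → F) :
    ∃! x : Fin n → F, x ∈ W ∧ ∀ j : {j : Fin n // IsRedIndex W j}, x j = a j := by
  classical
  obtain ⟨x, hx, hxa⟩ := exists_mem_forall_isRedIndex_ge W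
    (fun j => if h : IsRedIndex W j then a ⟨j, h⟩ else 0) n
  have hxa' : ∀ j : {j : Fin n // IsRedIndex W j}, x j = a j := fun j => by
    simpa [j.2] using hxa j j.2 (by omega)
  refine ⟨x, ⟨hx, hxa'⟩, fun y ⟨hy, hya⟩ => sub_eq_zero.mp ?_⟩
  exact eq_zero_of_forall_isRedIndex (W.sub_mem hy hx) fun j hj => by
    simp [hya ⟨j, hj⟩, hxa' ⟨j, hj⟩]
end

section
/- (Red-basic elements generate a coordinate system) Let W be a nontrivial subspace of F^n. Then the family of red-basic elements of W, indexed by the red indices of W, is a basis of W: every element of W can be expressed uniquely as a linear combination of the red-basic elements. -/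
/-!
The coordinate of `x ∈ W` along the red-basic element at a red index `j` is the entry `x j`.
Restricted to the red indices, the red-basic elements are the standard unit vectors
(`IsRedBasic.apply_red`), so reading off the entries at red indices determines the coefficients.
Conversely, an element of `W` vanishing at all red indices is zero, because a nonzero vector
terminates somewhere and that position is red (`eq_zero_of_forall_red`); applied to
`x - ∑ j, x j • B j` this gives existence.
-/

variable {F : Type*} [Field F] {n : ℕ}

/-- `w` is the red-basic element of `W` corresponding to the red index `i`:
it lies in `W`, terminates at `i` with entry `1`, and vanishes at all earlier red indices. -/
def IsRedBasic (W : Submodule F (Fin n → F)) (i : Fin n) (w : Fin n → F) : Prop :=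
  w ∈ W ∧ w i = 1 ∧ (∀ k, i < k → w k = 0) ∧ (∀ j, IsRedIndex W j → j < i → w j = 0)

/-- An element of `W` is determined by its entries at the red indices: the last nonzero entry of a
nonzero element sits at a red index. -/
theorem eq_zero_of_forall_red {W : Submodule F (Fin n → F)} {x : Fin n → F} (hx : x ∈ W)
    (h : ∀ j, IsRedIndex W j → x j = 0) : x = 0 := by
  classical
  by_contra hne
  obtain ⟨i, hi⟩ := Function.ne_iff.mp hne
  have hs : (Finset.univ.filter fun k => x k ≠ 0).Nonempty := ⟨i, by simpa using hi⟩
  have hmem := Finset.max'_mem _ hs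
  refine (Finset.mem_filter.mp hmem).2 (h _ ⟨x, hx, (Finset.mem_filter.mp hmem).2, ?_⟩)
  intro k hk
  by_contra hk0
  exact absurd (Finset.le_max' _ k (by simpa using hk0)) (not_le.mpr hk)

theorem IsRedBasic.apply_red {W : Submodule F (Fin n → F)} {i j : Fin n} {w : Fin n → F}
    (hw : IsRedBasic W i w) (hj : IsRedIndex W j) : w j = if i = j then 1 else 0 := by
  obtain ⟨-, h1, hgt, hlt⟩ := hw
  split_ifs with hij
  · exact hij ▸ h1
  · rcases lt_or_gt_of_ne hij with h | h
    · exact hgt j h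
    · exact hlt j hj h

/-- Red-basic elements generate a coordinate system: for a nontrivial subspace `W`,
every element of `W` is a unique linear combination of the red-basic elements of `W`. -/
theorem red_basic_coordinate_system (F : Type*) [Field F] (n : ℕ)
    (W : Submodule F (Fin n → F)) (hW : W ≠ ⊥)
    (B : {j : Fin n // IsRedIndex W j} → (Fin n → F))
    (hB : ∀ j : {j : Fin n // IsRedIndex W j}, IsRedBasic W j (B j)) :
    ∀ x ∈ W, ∃! c : {j : Fin n // IsRedIndex W j} → F,
      x = ∑ᶠ j : {j : Fin n // IsRedIndex W j}, c j • B j := by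
  classical
  intro x hx
  -- The entry of a linear combination at a red index is the corresponding coefficient.
  have key : ∀ (c : {j : Fin n // IsRedIndex W j} → F) (i : {j : Fin n // IsRedIndex W j}),
      (∑ j, c j • B j) (i : Fin n) = c i := by
    intro c i
    rw [Finset.sum_apply, Finset.sum_eq_single i]
    · simp [(hB i).apply_red i.2]
    · intro j _ hji
      simp [(hB j).apply_red i.2, Subtype.coe_injective.ne hji]
    · simp
  refine ⟨fun j => x j, ?_, ?_⟩
  · simp only [finsum_eq_sum_of_fintype]
    refine sub_eq_zero.mp (eq_zero_of_forall_red (W := W) ?_ fun j hj => ?_)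
    · exact W.sub_mem hx (W.sum_mem fun j _ => W.smul_mem _ (hB j).1)
    · rw [Pi.sub_apply, key (fun j => x j) ⟨j, hj⟩, sub_self]
  · intro c hc
    funext i
    rw [finsum_eq_sum_of_fintype] at hc
    rw [← key c i, ← hc]
end

section
/- (Membership test) Let W be a subspace of F^n with red indices i_1 < i_2 < ... < i_k and corresponding red-basic elements W_{i_1}, ..., W_{i_k}. Then a vector x ∈ F^n belongs to W if and only if x = x(i_1)·W_{i_1} + x(i_2)·W_{i_2} + ... + x(i_k)·W_{i_k}. -/
/-!
The combination `∑ x(i) • W_i` always lies in `W`, which gives one direction. For the other, each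
red-basic element `W_i` has entry `1` at `i` and `0` at every other red index
(`IsRedBasic.apply_of_ne`), so the combination agrees with `x` at all red indices. If `x ∈ W`, the
difference is an element of `W` vanishing at all red indices, and such an element is zero
(`eq_zero_of_mem_of_red_eq_zero`).
-/

variable {F : Type*} [Field F] {n : ℕ}

/-- The position of the last nonzero entry of a nonzero `v ∈ W` is a red index of `W`, so a vector
of `W` is determined by its entries at the red indices. -/
theorem eq_zero_of_mem_of_red_eq_zero (W : Submodule F (Fin n → F)) (v : Fin n → F) (hv : v ∈ W)
    (h : ∀ j, IsRedIndex W j → v j = 0) : v = 0 := by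
  classical
  by_contra hne
  obtain ⟨i, hi⟩ := Function.ne_iff.mp hne
  obtain ⟨m, hm, hmax⟩ := (Finset.univ.filter fun k => v k ≠ 0).exists_max_image id
    ⟨i, by simpa using hi⟩
  simp only [Finset.mem_filter, Finset.mem_univ, true_and, id] at hm hmax
  refine hm (h m ⟨v, hv, hm, fun k hk => ?_⟩)
  by_contra hk0
  exact absurd (hmax k hk0) (not_le.mpr hk)

theorem IsRedBasic.apply_of_ne {W : Submodule F (Fin n → F)} {i j : Fin n} {w : Fin n → F}
    (hw : IsRedBasic W i w) (hj : IsRedIndex W j) (hij : i ≠ j) : w j = 0 :=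
  hij.lt_or_gt.elim (hw.2.2.1 j) (hw.2.2.2 j hj)

/-- Membership test: `x ∈ W` iff `x` equals the linear combination of the red-basic
elements of `W` whose coefficients are the entries of `x` at the red indices of `W`. -/
theorem mem_iff_red_combination (F : Type*) [Field F] (n : ℕ)
    (W : Submodule F (Fin n → F))
    (B : {j : Fin n // IsRedIndex W j} → (Fin n → F))
    (hB : ∀ j : {j : Fin n // IsRedIndex W j}, IsRedBasic W j (B j))
    (x : Fin n → F) :
    x ∈ W ↔ x = ∑ᶠ j : {j : Fin n // IsRedIndex W j}, x j • B j := by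
  classical
  rw [finsum_eq_sum_of_fintype]
  have hS : ∑ j : {j : Fin n // IsRedIndex W j}, x j • B j ∈ W :=
    W.sum_mem fun j _ => W.smul_mem _ (hB j).1
  constructor
  · intro hx
    refine sub_eq_zero.mp (eq_zero_of_mem_of_red_eq_zero W _ (W.sub_mem hx hS) fun j hj => ?_)
    rw [Pi.sub_apply, Finset.sum_apply, Finset.sum_eq_single ⟨j, hj⟩]
    · simp [(hB ⟨j, hj⟩).2.1]
    · intro i _ hij
      simp [(hB i).apply_of_ne hj fun h => hij (Subtype.ext h)]
    · simp
  · intro hx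
    rw [hx]
    exact hS
end

section
/- (Monotonicity of red-imension) Let W and V be subspaces of F^n with W ≤ V. Then every red index of W is a red index of V; moreover, if the set of red indices of W equals the set of red indices of V, then W = V. In particular the number of red indices of W is at most the number of red indices of V, with equality only when W = V. -/
/-!
If `W ≤ V` have the same red indices and `v ∈ V` terminates at `j`, some `w ∈ W` also terminates at
`j`, and subtracting `(v j / w j) • w` from `v` gives an element of `V` whose support ends strictly
before `j`. Descending in this way shows `v ∈ W` (`mem_of_vanishes_from`). The counting claims
follow because an inclusion of finite sets of equal cardinality is an equality.
-/

variable {F : Type*} [Field F] {n : ℕ}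

/-- The descent, as an induction on a bound `m` such that `v` vanishes from position `m` on. -/
theorem mem_of_vanishes_from {W V : Submodule F (Fin n → F)} (hWV : W ≤ V)
    (hred : ∀ j, IsRedIndex V j → IsRedIndex W j) (m : ℕ) :
    ∀ v ∈ V, (∀ k : Fin n, m ≤ k.val → v k = 0) → v ∈ W := by
  induction m with
  | zero =>
    intro v _ h
    have hv : v = 0 := funext fun k => h k (Nat.zero_le _)
    exact hv ▸ W.zero_mem
  | succ m ih =>
    intro v hv h
    by_cases hm : ∃ j : Fin n, j.val = m ∧ v j ≠ 0
    · obtain ⟨j, rfl, hj⟩ := hm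
      obtain ⟨w, hw, hwj, hwk⟩ := hred j ⟨v, hv, hj, fun k hk => h k hk⟩
      have hsub : v - (v j / w j) • w ∈ W := by
        refine ih _ (V.sub_mem hv (V.smul_mem _ (hWV hw))) fun k hk => ?_
        rcases eq_or_lt_of_le hk with hk | hk
        · obtain rfl : j = k := Fin.ext hk
          simp [hwj]
        · simp [h k hk, hwk k hk]
      simpa using W.add_mem hsub (W.smul_mem (v j / w j) hw)
    · push Not at hm
      refine ih v hv fun k hk => ?_
      rcases eq_or_lt_of_le hk with hk | hk
      · exact hm k hk.symm
      · exact h k hk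

/-- Monotonicity of red-imension. -/
theorem red_indices_monotone (F : Type*) [Field F] (n : ℕ)
    (W V : Submodule F (Fin n → F)) (hWV : W ≤ V) :
    (∀ j, IsRedIndex W j → IsRedIndex V j) ∧
    ({j | IsRedIndex W j} = {j | IsRedIndex V j} → W = V) ∧
    {j | IsRedIndex W j}.ncard ≤ {j | IsRedIndex V j}.ncard ∧
    ({j | IsRedIndex W j}.ncard = {j | IsRedIndex V j}.ncard → W = V) := by
  have hmono : ∀ j, IsRedIndex W j → IsRedIndex V j :=
    fun j ⟨x, hx, ht⟩ => ⟨x, hWV hx, ht⟩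
  have heq : {j | IsRedIndex W j} = {j | IsRedIndex V j} → W = V := fun h =>
    le_antisymm hWV fun v hv =>
      mem_of_vanishes_from hWV (fun _ hj => h.ge hj) n v hv
        fun k hk => absurd k.isLt (not_lt.mpr hk)
  exact ⟨hmono, heq, Set.ncard_le_ncard hmono (Set.toFinite _),
    fun h => heq (Set.eq_of_subset_of_ncard_le hmono h.ge (Set.toFinite _))⟩
end

section
/- (Step-up bound for red-imension) Let W be a subspace of F^n and Y ∈ F^n. Then the number of red indices of the subspace W ⊔ span{Y} is at most one more than the number of red indices of W. In particular, for any X_1, ..., X_k, Y ∈ F^n, the number of red indices of span{X_1, ..., X_k, Y} is at most the number of red indices of span{X_1, ..., X_k} plus 1. -/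
/-!
At most one index is red for `W ⊔ span {Y}` but not for `W`. Given two such indices `i < j`,
take `w + a • Y` terminating at `i` and `v + b • Y` terminating at `j`. Here `a ≠ 0`, since `i` is
not red for `W`, so `(v + b • Y) - (b / a) • (w + a • Y)` lies in `W`. It still terminates at `j`
because `i < j`, contradicting that `j` is not red for `W` (`isRedIndex_or_of_lt`).
-/

variable {F : Type*} [Field F] {n : ℕ}

/-- If `i < j` are both red for `W ⊔ span {Y}`, then one of them is already red for `W`:
a suitable multiple of the vector terminating at `i` cancels the `Y`-component of the vector
terminating at `j`, without changing its entries at positions `≥ j`. -/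
lemma isRedIndex_or_of_lt {W : Submodule F (Fin n → F)} {Y : Fin n → F} {i j : Fin n}
    (hij : i < j) (hi : IsRedIndex (W ⊔ Submodule.span F {Y}) i)
    (hj : IsRedIndex (W ⊔ Submodule.span F {Y}) j) : IsRedIndex W i ∨ IsRedIndex W j := by
  obtain ⟨x, hx, hxi, hx0⟩ := hi
  obtain ⟨z, hz, hzj, hz0⟩ := hj
  obtain ⟨w, hw, y, hy, rfl⟩ := Submodule.mem_sup.1 hx
  obtain ⟨a, rfl⟩ := Submodule.mem_span_singleton.1 hy
  obtain ⟨v, hv, y, hy, rfl⟩ := Submodule.mem_sup.1 hz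
  obtain ⟨b, rfl⟩ := Submodule.mem_span_singleton.1 hy
  by_cases ha : a = 0
  · subst ha
    exact Or.inl ⟨w, hw, by simpa using hxi, by simpa using hx0⟩
  · have key : ∀ k, i < k → (v - (b / a) • w) k = (v + b • Y) k := by
      intro k hk
      have h := hx0 k hk
      simp only [Pi.add_apply, Pi.sub_apply, Pi.smul_apply, smul_eq_mul] at h ⊢
      rw [eq_neg_of_add_eq_zero_left h]
      field_simp
      ring
    refine Or.inr ⟨v - (b / a) • w, W.sub_mem hv (W.smul_mem _ hw), ?_, fun k hk => ?_⟩
    · rwa [key j hij]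
    · rw [key k (hij.trans hk), hz0 k hk]

lemma ncard_isRedIndex_sup_le (W : Submodule F (Fin n → F)) (Y : Fin n → F) :
    {j | IsRedIndex (W ⊔ Submodule.span F {Y}) j}.ncard ≤ {j | IsRedIndex W j}.ncard + 1 := by
  have hle := Set.ncard_le_ncard_sdiff_add_ncard
    {j | IsRedIndex (W ⊔ Submodule.span F {Y}) j} {j | IsRedIndex W j} (Set.toFinite _)
  have hone : ({j | IsRedIndex (W ⊔ Submodule.span F {Y}) j} \ {j | IsRedIndex W j}).ncard ≤ 1 := by
    refine (Set.ncard_le_one (Set.toFinite _)).2 ?_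
    rintro i ⟨hi, hi'⟩ j ⟨hj, hj'⟩
    rcases lt_trichotomy i j with h | h | h
    · exact ((isRedIndex_or_of_lt h hi hj).elim hi' hj').elim
    · exact h
    · exact ((isRedIndex_or_of_lt h hj hi).elim hj' hi').elim
  omega

/-- Step-up bound for red-imension: adjoining one vector to a subspace (resp. to a spanning
list) increases the number of red indices by at most one. -/
theorem red_index_step_up_bound (F : Type*) [Field F] (n : ℕ) :
    (∀ (W : Submodule F (Fin n → F)) (Y : Fin n → F),
      {j | IsRedIndex (W ⊔ Submodule.span F {Y}) j}.ncard ≤ {j | IsRedIndex W j}.ncard + 1) ∧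
    (∀ (k : ℕ) (X : Fin k → (Fin n → F)) (Y : Fin n → F),
      {j | IsRedIndex (Submodule.span F (insert Y (Set.range X))) j}.ncard ≤
        {j | IsRedIndex (Submodule.span F (Set.range X)) j}.ncard + 1) := by
  refine ⟨ncard_isRedIndex_sup_le, fun k X Y => ?_⟩
  rw [Submodule.span_insert, sup_comm]
  exact ncard_isRedIndex_sup_le _ Y
end

section
/- Every subspace W of F^n has exactly as many lime indices as red indices: the set of lime indices of W and the set of red indices of W have the same cardinality. -/
/-!
Both cardinalities equal `dim W`. For any linear order on the finite index set, call an index a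
*leading index* of `W` if it is the first index of the support of some element of `W`. Vectors of
`W` with pairwise distinct leading indices are linearly independent (triangularity), and a vector
of `W` vanishing at all leading indices of `W` is zero, so there are exactly `dim W` leading
indices. Lime indices are the leading indices for the usual order on `Fin n`, and red indices are
those for the reversed order.
-/

variable {F : Type*} [Field F] {n : ℕ}

/-- A (nonzero) vector `x` originates at position `j` if `x j ≠ 0` and all earlier entries vanish. -/
def OriginatesAt (x : Fin n → F) (j : Fin n) : Prop :=
  x j ≠ 0 ∧ ∀ k, k < j → x k = 0

/-- `j` is a lime index of `W` if some element of `W` originates at `j`. -/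
def IsLimeIndex (W : Submodule F (Fin n → F)) (j : Fin n) : Prop :=
  ∃ x ∈ W, OriginatesAt x j

/-- For every linear order on the finite index set, the number of positions at which some element
of `W` has its first nonzero entry is the dimension of `W`. -/
theorem ncard_leading_eq_finrank {K ι : Type*} [Field K] [LinearOrder ι] [Finite ι]
    (W : Submodule K (ι → K)) :
    {j | ∃ x ∈ W, x j ≠ 0 ∧ ∀ k, k < j → x k = 0}.ncard = Module.finrank K W := by
  classical
  have := Fintype.ofFinite ι
  set S : Set ι := {j | ∃ x ∈ W, x j ≠ 0 ∧ ∀ k, k < j → x k = 0} with hS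
  have hcard : S.ncard = Fintype.card S := by
    rw [← Nat.card_coe_set_eq, Nat.card_eq_fintype_card]
  rw [hcard]
  apply le_antisymm
  · choose v hvW hv0 hvlt using fun j : S => j.2
    have hli : LinearIndependent K (fun j : S => (⟨v j, hvW j⟩ : W)) := by
      rw [Fintype.linearIndependent_iff]
      intro g hg j
      induction j using WellFoundedLT.induction with
      | ind j ih =>
        have h : ∑ i, g i * v i j = 0 := by
          have := congrFun (congrArg Subtype.val hg) (j : ι)
          simpa using this
        -- In coordinate `j`, terms before `j` vanish by induction, those after `j` by the choice
        -- of the vectors.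
        rw [Finset.sum_eq_single j] at h
        · exact (mul_eq_zero.mp h).resolve_right (hv0 j)
        · intro i _ hij
          rcases lt_or_gt_of_ne hij with hlt | hgt
          · rw [ih i hlt, zero_mul]
          · rw [hvlt i j hgt, mul_zero]
        · simp
    exact hli.fintype_card_le_finrank
  · let r : W →ₗ[K] (S → K) := (LinearMap.funLeft K K (Subtype.val : S → ι)).comp W.subtype
    have hr : Function.Injective r := by
      rw [injective_iff_map_eq_zero]
      rintro ⟨x, hx⟩ h
      have hxS : ∀ j ∈ S, x j = 0 := fun j hj => congrFun h ⟨j, hj⟩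
      have hx0 : ∀ j, x j = 0 := by
        intro j
        induction j using WellFoundedLT.induction with
        | ind j ih =>
          by_contra hne
          exact hne (hxS j ⟨x, hx, hne, ih⟩)
      ext j
      exact hx0 j
    simpa using LinearMap.finrank_le_finrank_of_injective hr

/-- Every subspace of `F^n` has as many lime indices as red indices. -/
theorem ncard_lime_eq_ncard_red (F : Type*) [Field F] (n : ℕ)
    (W : Submodule F (Fin n → F)) :
    {j | IsLimeIndex W j}.ncard = {j | IsRedIndex W j}.ncard := by
  -- Terminating at `j` is originating at `j` for the reversed order.
  exact (ncard_leading_eq_finrank W).trans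
    (@ncard_leading_eq_finrank F (Fin n) _ (inferInstanceAs (LinearOrder (Fin n)ᵒᵈ)) _ W).symm
end

section
/- (Duality of red/lime indices of •-complements) Let W be a subspace of F^n. Then an index j is a lime index of W^• if and only if j is not a red index of W. -/
/-!
If `x ∈ W^•` originates at `j` and `y ∈ W` terminates at `j`, every term of `∑ i, x i * y i` with
`i ≠ j` vanishes, so the sum is `x j * y j ≠ 0`, a contradiction.

Conversely, let `U` be the space of vectors supported on positions `< j`. If `j` is not a red
index of `W`, then `e_j ∉ W + U`, since the `W`-part of such a decomposition of `e_j` would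
terminate at `j`. Hence some linear form vanishes on `W + U` but not at `e_j`; its coefficient
vector lies in `W^•` and originates at `j`.
-/

variable {F : Type*} [Field F] {n : ℕ}

/-- The `•`-complement `W^•` of `W`: all vectors whose dot product with every element
of `W` vanishes. -/
def bulletComp (W : Submodule F (Fin n → F)) : Submodule F (Fin n → F) where
  carrier := {x | ∀ y ∈ W, ∑ i, x i * y i = 0}
  add_mem' := by
    intro a b ha hb y hy
    simp only [Set.mem_setOf_eq] at ha hb ⊢
    simp [Pi.add_apply, add_mul, Finset.sum_add_distrib, ha y hy, hb y hy]
  zero_mem' := by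
    intro y hy
    simp
  smul_mem' := by
    intro c a ha y hy
    simp only [Set.mem_setOf_eq] at ha ⊢
    simp [Pi.smul_apply, smul_eq_mul, mul_assoc, ← Finset.mul_sum, ha y hy]

/-- Duality of red/lime indices of `•`-complements: the lime indices of `W^•` are exactly
the non-red indices of `W`. -/
theorem lime_of_bulletComp_iff_not_red (F : Type*) [Field F] (n : ℕ)
    (W : Submodule F (Fin n → F)) (j : Fin n) :
    IsLimeIndex (bulletComp W) j ↔ ¬ IsRedIndex W j := by
  constructor
  · rintro ⟨x, hx, hxj, hx0⟩ ⟨y, hy, hyj, hy0⟩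
    have hsum : ∑ i, x i * y i = 0 := hx y hy
    rw [Finset.sum_eq_single j] at hsum
    · exact mul_ne_zero hxj hyj hsum
    · intro i _ hij
      rcases lt_or_gt_of_ne hij with h | h
      · simp [hx0 i h]
      · simp [hy0 i h]
    · simp
  · intro hred
    let U : Submodule F (Fin n → F) :=
      { carrier := {v | ∀ k, j ≤ k → v k = 0}
        add_mem' := fun {a b} ha hb k hk => by simp [ha k hk, hb k hk]
        zero_mem' := fun k _ => rfl
        smul_mem' := fun c a ha k hk => by simp [ha k hk] }
    have hnot : (Pi.single j 1 : Fin n → F) ∉ W ⊔ U := by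
      intro hmem
      obtain ⟨w, hw, u, hu, hwu⟩ := Submodule.mem_sup.1 hmem
      have hwk : ∀ k, j ≤ k → w k = (Pi.single j 1 : Fin n → F) k := fun k hk => by
        rw [← hwu, Pi.add_apply, hu k hk, add_zero]
      refine hred ⟨w, hw, ?_, fun k hk => ?_⟩
      · simp [hwk j le_rfl]
      · rw [hwk k hk.le, Pi.single_eq_of_ne hk.ne']
    obtain ⟨f, hfj, hf⟩ := Submodule.exists_le_ker_of_notMem hnot
    refine ⟨fun i => f (Pi.single i 1), fun y hy => ?_, hfj, fun k hk => ?_⟩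
    · have hfy : f y = 0 := hf (Submodule.mem_sup_left hy)
      rw [← hfy]
      conv_rhs => rw [pi_eq_sum_univ' y, map_sum]
      refine Finset.sum_congr rfl fun i _ => ?_
      rw [map_smul, smul_eq_mul, mul_comm]
    · refine hf (Submodule.mem_sup_right fun l hl => ?_)
      exact Pi.single_eq_of_ne (hk.trans_le hl).ne' 1
end

section
/- (Effect of truncation on red/lime indices) Let n ≥ 1, let W be a subspace of F^(n+1), and let U be the image of W in F^n under the linear map dropping the last coordinate (x ↦ x ∘ Fin.castSucc). Then: (a) for every index j < n, j is a lime index of U if and only if j is a lime index of W; (b) if the last index n is not a red index of W, or if the standard basis vector e_n belongs to W (i.e., n is both a red and a lime index of W), then for every j < n, j is a red index of U if and only if j is a red index of W; (c) if n is a red index of W but not a lime index of W, then there is exactly one index j < n which is a red index of U but not a red index of W, and every other index j < n is a red index of U if and only if it is a red index of W. -/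
/-!
Truncation maps `W` onto `U`, and a vector of `W` terminates at `j < n` exactly when its truncation
does and its last entry is `0` (`terminatesAt_castSucc_iff`). So red indices of `W` below `n` are red
in `U`, and the only issue for the converse is to make the last entry vanish. This is automatic if
`n` is not red, and is achieved by subtracting a multiple of `e_n` if `e_n ∈ W`.

If `n` is red but not lime, every `x ∈ W` with nonzero last entry has nonzero truncation, which
therefore terminates somewhere. Among all such `x` choose `y` whose truncation terminates at the
smallest possible index `j`. A vector of `W` terminating at `j` could be used to cancel `y j`,
contradicting minimality, so `j` is red in `U` but not in `W`. At any other index `j'`, a vector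
with nonzero last entry whose truncation terminates at `j'` has `j < j'`, so cancelling its last
entry with `y` keeps the terminating position `j'`.
-/

variable {F : Type*} [Field F] {n : ℕ}

theorem exists_terminatesAt {x : Fin n → F} (hx : ∃ k, x k ≠ 0) : ∃ j, TerminatesAt x j := by
  obtain ⟨j, hj, hmax⟩ := WellFounded.has_min (wellFounded_gt (α := Fin n)) {k | x k ≠ 0} hx
  refine ⟨j, hj, fun k hk => ?_⟩
  by_contra h
  exact hmax k h hk

theorem terminatesAt_castSucc_iff {x : Fin (n + 1) → F} {j : Fin n} :
    TerminatesAt x j.castSucc ↔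
      TerminatesAt (fun i : Fin n => x i.castSucc) j ∧ x (Fin.last n) = 0 := by
  constructor
  · rintro ⟨h0, h⟩
    exact ⟨⟨h0, fun k hk => h _ (Fin.castSucc_lt_castSucc_iff.2 hk)⟩, h _ (Fin.castSucc_lt_last j)⟩
  · rintro ⟨⟨h0, h⟩, hl⟩
    refine ⟨h0, fun k => ?_⟩
    induction k using Fin.lastCases with
    | last => exact fun _ => hl
    | cast i => exact fun hi => h i (Fin.castSucc_lt_castSucc_iff.1 hi)

theorem originatesAt_castSucc_iff {x : Fin (n + 1) → F} {j : Fin n} :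
    OriginatesAt x j.castSucc ↔ OriginatesAt (fun i : Fin n => x i.castSucc) j := by
  constructor
  · rintro ⟨h0, h⟩
    exact ⟨h0, fun k hk => h _ (Fin.castSucc_lt_castSucc_iff.2 hk)⟩
  · rintro ⟨h0, h⟩
    refine ⟨h0, fun k => ?_⟩
    induction k using Fin.lastCases with
    | last => exact fun hk => absurd hk (Fin.castSucc_lt_last j).le.not_gt
    | cast i => exact fun hi => h i (Fin.castSucc_lt_castSucc_iff.1 hi)

theorem terminatesAt_last_iff {x : Fin (n + 1) → F} :
    TerminatesAt x (Fin.last n) ↔ x (Fin.last n) ≠ 0 :=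
  ⟨fun h => h.1, fun h => ⟨h, fun k hk => absurd hk (Fin.le_last k).not_gt⟩⟩

theorem originatesAt_last_iff {x : Fin (n + 1) → F} :
    OriginatesAt x (Fin.last n) ↔ x (Fin.last n) ≠ 0 ∧ ∀ i : Fin n, x i.castSucc = 0 := by
  refine and_congr_right fun _ => ⟨fun h i => h _ (Fin.castSucc_lt_last i), fun h k => ?_⟩
  induction k using Fin.lastCases with
  | last => exact fun hk => absurd hk (lt_irrefl _)
  | cast i => exact fun _ => h i

/-- Effect of truncation (dropping the last coordinate) on red/lime indices. -/
theorem truncation_effect (F : Type*) [Field F] (n : ℕ) (hn : 1 ≤ n)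
    (W : Submodule F (Fin (n + 1) → F)) (U : Submodule F (Fin n → F))
    (hU : U = Submodule.map (LinearMap.funLeft F F Fin.castSucc) W) :
    (∀ j : Fin n, IsLimeIndex U j ↔ IsLimeIndex W j.castSucc) ∧
    ((¬ IsRedIndex W (Fin.last n) ∨ Pi.single (Fin.last n) (1 : F) ∈ W) →
      ∀ j : Fin n, IsRedIndex U j ↔ IsRedIndex W j.castSucc) ∧
    ((IsRedIndex W (Fin.last n) ∧ ¬ IsLimeIndex W (Fin.last n)) →
      ∃ j : Fin n, (IsRedIndex U j ∧ ¬ IsRedIndex W j.castSucc) ∧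
        ∀ j' : Fin n, j' ≠ j → (IsRedIndex U j' ↔ IsRedIndex W j'.castSucc)) := by
  subst hU
  have hred : ∀ j : Fin n, IsRedIndex (Submodule.map (LinearMap.funLeft F F Fin.castSucc) W) j ↔
      ∃ x ∈ W, TerminatesAt (fun i : Fin n => x i.castSucc) j := by
    intro j
    constructor
    · rintro ⟨_, ⟨x, hx, rfl⟩, h⟩
      exact ⟨x, hx, h⟩
    · rintro ⟨x, hx, h⟩
      exact ⟨_, ⟨x, hx, rfl⟩, h⟩
  have hredW : ∀ j : Fin n, IsRedIndex W j.castSucc ↔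
      ∃ x ∈ W, TerminatesAt (fun i : Fin n => x i.castSucc) j ∧ x (Fin.last n) = 0 :=
    fun j => exists_congr fun x => and_congr_right fun _ => terminatesAt_castSucc_iff
  have hmono : ∀ j : Fin n, IsRedIndex W j.castSucc →
      IsRedIndex (Submodule.map (LinearMap.funLeft F F Fin.castSucc) W) j := by
    intro j h
    obtain ⟨x, hx, h, -⟩ := (hredW j).1 h
    exact (hred j).2 ⟨x, hx, h⟩
  refine ⟨fun j => ⟨?_, ?_⟩, fun hcase j => ⟨fun h => ?_, hmono j⟩, ?_⟩
  · rintro ⟨_, ⟨x, hx, rfl⟩, h⟩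
    exact ⟨x, hx, originatesAt_castSucc_iff.2 h⟩
  · rintro ⟨x, hx, h⟩
    exact ⟨_, ⟨x, hx, rfl⟩, originatesAt_castSucc_iff.1 h⟩
  · obtain ⟨x, hx, h⟩ := (hred j).1 h
    refine (hredW j).2 ?_
    rcases hcase with hnot | he
    · refine ⟨x, hx, h, ?_⟩
      by_contra h0
      exact hnot ⟨x, hx, terminatesAt_last_iff.2 h0⟩
    · refine ⟨x - x (Fin.last n) • Pi.single (Fin.last n) (1 : F),
        W.sub_mem hx (W.smul_mem _ he), ?_, by simp⟩
      simpa [(Fin.castSucc_lt_last _).ne] using h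
  · rintro ⟨⟨x₀, hx₀, hx₀t⟩, hlime⟩
    have hex : ∀ x ∈ W, x (Fin.last n) ≠ 0 →
        ∃ j, TerminatesAt (fun i : Fin n => x i.castSucc) j := by
      intro x hx h0
      apply exists_terminatesAt
      by_contra! h
      exact hlime ⟨x, hx, originatesAt_last_iff.2 ⟨h0, h⟩⟩
    obtain ⟨j₀, hj₀⟩ := hex x₀ hx₀ hx₀t.1
    obtain ⟨j, ⟨y, hy, hyl, hyj⟩, hmin⟩ := WellFounded.has_min (wellFounded_lt (α := Fin n))
      {j | ∃ x ∈ W, x (Fin.last n) ≠ 0 ∧ TerminatesAt (fun i : Fin n => x i.castSucc) j}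
      ⟨j₀, x₀, hx₀, hx₀t.1, hj₀⟩
    refine ⟨j, ⟨(hred j).2 ⟨y, hy, hyj⟩, fun h => ?_⟩, fun j' hne => ⟨fun h => ?_, hmono j'⟩⟩
    -- If `z ∈ W` terminates at `j`, cancelling `y j` with `z` gives a vector contradicting the
    -- minimality of `j`.
    · obtain ⟨z, hz, ⟨hzj, hzk⟩, hzl⟩ := (hredW j).1 h
      have hw : y - (y j.castSucc / z j.castSucc) • z ∈ W := W.sub_mem hy (W.smul_mem _ hz)
      have hwl : (y - (y j.castSucc / z j.castSucc) • z) (Fin.last n) ≠ 0 := by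
        simpa [hzl] using hyl
      obtain ⟨i, hi⟩ := hex _ hw hwl
      refine hmin i ⟨_, hw, hwl, hi⟩ ?_
      by_contra hij
      apply hi.1
      rcases (not_lt.1 hij).eq_or_lt with rfl | hlt
      · have : z j.castSucc ≠ 0 := hzj
        simp [this]
      · have h1 : y i.castSucc = 0 := hyj.2 i hlt
        have h2 : z i.castSucc = 0 := hzk i hlt
        simp [h1, h2]
    · obtain ⟨x, hx, hxt⟩ := (hred j').1 h
      refine (hredW j').2 ?_
      by_cases hxl : x (Fin.last n) = 0
      · exact ⟨x, hx, hxt, hxl⟩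
      have hlt : j < j' := lt_of_le_of_ne (not_lt.1 (hmin j' ⟨x, hx, hxl, hxt⟩)) hne.symm
      refine ⟨x - (x (Fin.last n) / y (Fin.last n)) • y, W.sub_mem hx (W.smul_mem _ hy),
        ⟨?_, fun k hk => ?_⟩, by simp [hyl]⟩
      · have h1 : y j'.castSucc = 0 := hyj.2 j' hlt
        simpa [h1] using hxt.1
      · have h1 : y k.castSucc = 0 := hyj.2 k (hlt.trans hk)
        have h2 : x k.castSucc = 0 := hxt.2 k hk
        simp [h1, h2]
end
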